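/- There is a universal constant C > 0 such that the following holds for every positive integer n. Let ξ₁,…,ξ_n be i.i.d. Bernoulli(1/2) random variables and Z₁,…,Z_n be i.i.d. standard Gaussian random variables, all mutually independent, and set S_n = Σ_{i=1}^{n} ξ_i Z_i². Then |𝔼[((2/n) S_n)^{1/2}] − (1 − 5/(8n))| ≤ C/n². -/

import Mathlib

/-!
`2 S_n / n` is an average of `n` i.i.d. nonnegative variables of mean `1` and variance `5`. The
third-order Taylor polynomial of the square root at `1` approximates it with error at most
`(x - 1) ^ 4` on all of `[0, ∞)`, not only near `1`, so no truncation is needed: with `μ_k` the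
`k`-th central moment, a nonnegative variable of mean `1` satisfies `E √X = 1 - μ₂ / 8 + μ₃ / 16`
up to an error of at most `μ₄`. For an average of `n` i.i.d. variables of variance `σ²`, one has
`μ₂ = σ² / n`; third central moments of independent variables add up, so `μ₃` is of order
`1 / n ^ 2`; and `μ₄ = O(1 / n ^ 2)`, with leading part `3 (σ² / n) ^ 2`.
-/

open MeasureTheory ProbabilityTheory
open scoped NNReal ENNReal

noncomputable section

/-- The fair Bernoulli measure on `Bool`. -/
def bern : Measure Bool := (PMF.bernoulli 2⁻¹ (by norm_num)).toMeasure

section Moments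

variable {Ω : Type*} [MeasurableSpace Ω] {P : Measure Ω} {X Y : Ω → ℝ} {n p : ℕ}

lemma integrable_pow_of_memLp [IsFiniteMeasure P] (hX : MemLp X p P) (hn : n ≤ p) :
    Integrable (fun ω ↦ X ω ^ n) P := by
  have hXn : MemLp X n P := hX.mono_exponent (by exact_mod_cast hn)
  refine (integrable_norm_iff (hXn.aestronglyMeasurable.pow n)).1 ?_
  simpa only [Pi.pow_apply, norm_pow] using hXn.integrable_norm_pow'

lemma integral_add_pow_of_indepFun [IsFiniteMeasure P] (hXY : IndepFun X Y P)
    (hX : MemLp X n P) (hY : MemLp Y n P) :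
    ∫ ω, (X ω + Y ω) ^ n ∂P = ∑ m ∈ Finset.range (n + 1),
      (∫ ω, X ω ^ m ∂P) * (∫ ω, Y ω ^ (n - m) ∂P) * n.choose m := by
  have hindep (m k : ℕ) : IndepFun (fun ω ↦ X ω ^ m) (fun ω ↦ Y ω ^ k) P :=
    hXY.comp (measurable_id.pow_const m) (measurable_id.pow_const k)
  simp_rw [add_pow]
  rw [integral_finsetSum]
  · refine Finset.sum_congr rfl fun m _ ↦ ?_
    rw [integral_mul_const, (hindep m (n - m)).integral_fun_mul_eq_mul_integral
      (hX.aestronglyMeasurable.pow m) (hY.aestronglyMeasurable.pow (n - m))]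
  · intro m hm
    have hmn : m ≤ n := Finset.mem_range_succ_iff.1 hm
    exact ((hindep m (n - m)).integrable_mul (integrable_pow_of_memLp hX hmn)
      (integrable_pow_of_memLp hY (Nat.sub_le n m))).mul_const _

lemma centralMoment_add_of_indepFun [IsFiniteMeasure P] (hXY : IndepFun X Y P)
    (hX : MemLp X n P) (hY : MemLp Y n P) :
    centralMoment (X + Y) n P = ∑ m ∈ Finset.range (n + 1),
      centralMoment X m P * centralMoment Y (n - m) P * n.choose m := by
  have hcentered : IndepFun (fun ω ↦ X ω - P[X]) (fun ω ↦ Y ω - P[Y]) P :=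
    hXY.comp (measurable_id.sub_const _) (measurable_id.sub_const _)
  have hbinom := integral_add_pow_of_indepFun hcentered (hX.sub (memLp_const _))
    (hY.sub (memLp_const _))
  rcases Nat.eq_zero_or_pos n with rfl | hn
  · simpa [centralMoment] using hbinom
  have h1 : (1 : ℝ≥0∞) ≤ n := by exact_mod_cast hn
  have hmean : P[X + Y] = P[X] + P[Y] := integral_add (hX.integrable h1) (hY.integrable h1)
  rw [centralMoment, hmean]
  refine Eq.trans (integral_congr_ae (.of_forall fun ω ↦ ?_)) hbinom
  simp only [Pi.pow_apply, Pi.sub_apply, Pi.add_apply]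
  ring

lemma centralMoment_const_smul (c : ℝ) (X : Ω → ℝ) (n : ℕ) (P : Measure Ω) :
    centralMoment (c • X) n P = c ^ n * centralMoment X n P := by
  simp only [centralMoment, Pi.pow_apply, Pi.sub_apply, Pi.smul_apply, smul_eq_mul,
    integral_const_mul, ← mul_sub, mul_pow]

lemma centralMoment_nonneg_of_even (hn : Even n) (X : Ω → ℝ) (P : Measure Ω) :
    0 ≤ centralMoment X n P :=
  integral_nonneg fun _ ↦ hn.pow_nonneg _

lemma centralMoment_eq_of_identDistrib {Ω' : Type*} [MeasurableSpace Ω'] {Q : Measure Ω'}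
    {Y : Ω' → ℝ} (h : IdentDistrib X Y P Q) (n : ℕ) :
    centralMoment X n P = centralMoment Y n Q := by
  rw [centralMoment, centralMoment, h.integral_eq]
  exact (h.comp ((measurable_id.sub_const Q[Y]).pow_const n)).integral_eq

lemma variance_sum_of_iIndepFun {ι : Type*} {X : ι → Ω → ℝ}
    (hindep : iIndepFun X P) (hX : ∀ i, MemLp (X i) 2 P)
    (s : Finset ι) : Var[∑ i ∈ s, X i; P] = ∑ i ∈ s, Var[X i; P] :=
  IndepFun.variance_sum (fun i _ ↦ hX i) fun _ _ _ _ hij ↦ hindep.indepFun hij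

section Probability

variable [IsProbabilityMeasure P]

lemma centralMoment_order_zero (X : Ω → ℝ) : centralMoment X 0 P = 1 := by
  simp [centralMoment]

lemma centralMoment_three_add_of_indepFun (hXY : IndepFun X Y P) (hX : MemLp X 3 P)
    (hY : MemLp Y 3 P) :
    centralMoment (X + Y) 3 P = centralMoment X 3 P + centralMoment Y 3 P := by
  rw [centralMoment_add_of_indepFun hXY hX hY]
  simp [Finset.sum_range_succ, centralMoment_order_zero, add_comm]

lemma centralMoment_four_add_of_indepFun (hXY : IndepFun X Y P) (hX : MemLp X 4 P)
    (hY : MemLp Y 4 P) :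
    centralMoment (X + Y) 4 P =
      centralMoment X 4 P + 6 * Var[X; P] * Var[Y; P] + centralMoment Y 4 P := by
  rw [centralMoment_add_of_indepFun hXY hX hY]
  simp only [Nat.reduceAdd, Finset.sum_range_succ, Finset.range_one, Finset.sum_singleton,
    centralMoment_order_zero, centralMoment_one, tsub_zero, tsub_self, Nat.reduceSub,
    centralMoment_two_eq_variance hX.aemeasurable, centralMoment_two_eq_variance hY.aemeasurable,
    Nat.choose, Nat.cast_one, Nat.cast_ofNat, one_mul, zero_mul, mul_zero, add_zero]
  ring

section Sum

variable {ι : Type*} {X : ι → Ω → ℝ}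

lemma centralMoment_three_sum_of_iIndepFun (hindep : iIndepFun X P) (hX : ∀ i, MemLp (X i) 3 P)
    (s : Finset ι) :
    centralMoment (∑ i ∈ s, X i) 3 P = ∑ i ∈ s, centralMoment (X i) 3 P := by
  classical
  induction s using Finset.induction_on with
  | empty => simp
  | insert a s ha ih =>
    have hindep_as : IndepFun (X a) (∑ i ∈ s, X i) P :=
      (hindep.indepFun_finsetSum_of_notMem₀ (fun i ↦ (hX i).aemeasurable) ha).symm
    rw [Finset.sum_insert ha, Finset.sum_insert ha, ← ih,
      centralMoment_three_add_of_indepFun hindep_as (hX a) (memLp_finsetSum' s fun i _ ↦ hX i)]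

lemma centralMoment_four_sum_of_iIndepFun (hindep : iIndepFun X P) (hX : ∀ i, MemLp (X i) 4 P)
    (s : Finset ι) :
    centralMoment (∑ i ∈ s, X i) 4 P = ∑ i ∈ s, centralMoment (X i) 4 P +
      3 * ((∑ i ∈ s, Var[X i; P]) ^ 2 - ∑ i ∈ s, Var[X i; P] ^ 2) := by
  classical
  have hX₂ (i : ι) : MemLp (X i) 2 P := (hX i).mono_exponent (by norm_num)
  induction s using Finset.induction_on with
  | empty => simp
  | insert a s ha ih =>
    have hindep_as : IndepFun (X a) (∑ i ∈ s, X i) P :=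
      (hindep.indepFun_finsetSum_of_notMem₀ (fun i ↦ (hX i).aemeasurable) ha).symm
    rw [Finset.sum_insert ha,
      centralMoment_four_add_of_indepFun hindep_as (hX a) (memLp_finsetSum' s fun i _ ↦ hX i),
      ih, variance_sum_of_iIndepFun hindep hX₂]
    simp only [Finset.sum_insert ha]
    ring

end Sum

end Probability

section Average

open scoped Finset

variable {ι Ω' : Type*} [MeasurableSpace Ω'] {Q : Measure Ω'} {X : ι → Ω → ℝ} {Y : Ω' → ℝ}

lemma integral_average (hdist : ∀ i, IdentDistrib (X i) Y P Q) (hY : Integrable Y Q)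
    {s : Finset ι} (hs : s.Nonempty) : P[(#s : ℝ)⁻¹ • ∑ i ∈ s, X i] = Q[Y] := by
  have hcard : (#s : ℝ) ≠ 0 := by exact_mod_cast hs.card_ne_zero
  simp only [Pi.smul_apply, Finset.sum_apply, smul_eq_mul, integral_const_mul]
  rw [integral_finsetSum s fun i _ ↦ (hdist i).integrable_iff.2 hY,
    Finset.sum_congr rfl fun i _ ↦ (hdist i).integral_eq, Finset.sum_const, nsmul_eq_mul,
    inv_mul_cancel_left₀ hcard]

lemma average_nonneg_ae (hdist : ∀ i, IdentDistrib (X i) Y P Q) (hY : 0 ≤ᵐ[Q] Y)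
    (s : Finset ι) : 0 ≤ᵐ[P] (#s : ℝ)⁻¹ • ∑ i ∈ s, X i := by
  have hX : ∀ᵐ ω ∂P, ∀ i ∈ s, 0 ≤ X i ω :=
    (Filter.eventually_all_finset s).2 fun i _ ↦
      (hdist i).symm.ae_mem_snd measurableSet_Ici hY
  filter_upwards [hX] with ω hω
  simp only [Pi.smul_apply, Finset.sum_apply, smul_eq_mul]
  exact mul_nonneg (by positivity) (Finset.sum_nonneg hω)

lemma variance_average (hindep : iIndepFun X P) (hdist : ∀ i, IdentDistrib (X i) Y P Q)
    (hY : MemLp Y 2 Q) (s : Finset ι) :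
    Var[(#s : ℝ)⁻¹ • ∑ i ∈ s, X i; P] = Var[Y; Q] / #s := by
  rw [variance_smul, variance_sum_of_iIndepFun hindep (fun i ↦ (hdist i).symm.memLp_snd hY),
    Finset.sum_congr rfl fun i _ ↦ (hdist i).variance_eq, Finset.sum_const, nsmul_eq_mul]
  rcases s.eq_empty_or_nonempty with rfl | hs
  · simp
  · field_simp

variable [IsProbabilityMeasure P]

lemma centralMoment_three_average (hindep : iIndepFun X P)
    (hdist : ∀ i, IdentDistrib (X i) Y P Q) (hY : MemLp Y 3 Q) (s : Finset ι) :
    centralMoment ((#s : ℝ)⁻¹ • ∑ i ∈ s, X i) 3 P = centralMoment Y 3 Q / #s ^ 2 := by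
  rw [centralMoment_const_smul,
    centralMoment_three_sum_of_iIndepFun hindep (fun i ↦ (hdist i).symm.memLp_snd hY),
    Finset.sum_congr rfl fun i _ ↦ centralMoment_eq_of_identDistrib (hdist i) 3,
    Finset.sum_const, nsmul_eq_mul]
  rcases s.eq_empty_or_nonempty with rfl | hs
  · simp
  · field_simp

lemma centralMoment_four_average (hindep : iIndepFun X P)
    (hdist : ∀ i, IdentDistrib (X i) Y P Q) (hY : MemLp Y 4 Q) (s : Finset ι) :
    centralMoment ((#s : ℝ)⁻¹ • ∑ i ∈ s, X i) 4 P =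
      (centralMoment Y 4 Q + 3 * (#s - 1) * Var[Y; Q] ^ 2) / #s ^ 3 := by
  rw [centralMoment_const_smul,
    centralMoment_four_sum_of_iIndepFun hindep (fun i ↦ (hdist i).symm.memLp_snd hY),
    Finset.sum_congr rfl fun i _ ↦ centralMoment_eq_of_identDistrib (hdist i) 4,
    Finset.sum_congr rfl fun i _ ↦ (hdist i).variance_eq,
    Finset.sum_congr rfl fun i _ ↦ congrArg (· ^ 2) (hdist i).variance_eq]
  simp only [Finset.sum_const, nsmul_eq_mul]
  rcases s.eq_empty_or_nonempty with rfl | hs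
  · simp
  · field_simp

lemma centralMoment_four_average_le (hindep : iIndepFun X P)
    (hdist : ∀ i, IdentDistrib (X i) Y P Q) (hY : MemLp Y 4 Q) (s : Finset ι) :
    centralMoment ((#s : ℝ)⁻¹ • ∑ i ∈ s, X i) 4 P ≤
      (centralMoment Y 4 Q + 3 * Var[Y; Q] ^ 2) / #s ^ 2 := by
  rcases s.eq_empty_or_nonempty with rfl | hs
  · simp
  have hcard : (1 : ℝ) ≤ #s := by exact_mod_cast hs.card_pos
  rw [centralMoment_four_average hindep hdist hY, div_le_div_iff₀ (by positivity) (by positivity)]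
  calc (centralMoment Y 4 Q + 3 * (#s - 1) * Var[Y; Q] ^ 2) * (#s : ℝ) ^ 2
      ≤ (#s * centralMoment Y 4 Q + 3 * #s * Var[Y; Q] ^ 2) * (#s : ℝ) ^ 2 := by
        gcongr
        · exact le_mul_of_one_le_left (centralMoment_nonneg_of_even (by decide) Y Q) hcard
        · exact sub_le_self _ zero_le_one
    _ = (centralMoment Y 4 Q + 3 * Var[Y; Q] ^ 2) * (#s : ℝ) ^ 3 := by ring

end Average

end Moments

section Sqrt

variable {Ω : Type*} [MeasurableSpace Ω] {P : Measure Ω}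

lemma abs_sqrt_sub_taylor_le {x : ℝ} (hx : 0 ≤ x) :
    |√x - (1 + (x - 1) / 2 - (x - 1) ^ 2 / 8 + (x - 1) ^ 3 / 16)| ≤ (x - 1) ^ 4 := by
  -- In terms of `s = √x` the remainder is a polynomial with a zero of order four at `s = 1`.
  obtain ⟨s, hs, rfl⟩ : ∃ s : ℝ, 0 ≤ s ∧ x = s ^ 2 :=
    ⟨√x, Real.sqrt_nonneg x, (Real.sq_sqrt hx).symm⟩
  have hremainder : s - (1 + (s ^ 2 - 1) / 2 - (s ^ 2 - 1) ^ 2 / 8 + (s ^ 2 - 1) ^ 3 / 16) =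
      -((s - 1) ^ 4 * ((s ^ 2 + 4 * s + 5) / 16)) := by ring
  have hquadratic : (s ^ 2 + 4 * s + 5) / 16 ≤ (s + 1) ^ 4 := by
    nlinarith [pow_nonneg hs 3, pow_nonneg hs 4, pow_nonneg hs 2]
  rw [Real.sqrt_sq hs, hremainder, abs_neg, abs_of_nonneg (by positivity)]
  calc (s - 1) ^ 4 * ((s ^ 2 + 4 * s + 5) / 16)
      ≤ (s - 1) ^ 4 * (s + 1) ^ 4 := by gcongr
    _ = (s ^ 2 - 1) ^ 4 := by ring

lemma integrable_sqrt [IsFiniteMeasure P] {X : Ω → ℝ} (hX : Integrable X P) :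
    Integrable (fun ω ↦ √(X ω)) P := by
  refine (hX.norm.add (integrable_const 1)).mono' hX.aemeasurable.sqrt.aestronglyMeasurable
    (.of_forall fun ω ↦ ?_)
  rw [Real.norm_of_nonneg (Real.sqrt_nonneg _), Pi.add_apply, Real.norm_eq_abs,
    Real.sqrt_le_left (by positivity)]
  nlinarith [le_abs_self (X ω), abs_nonneg (X ω)]

variable [IsProbabilityMeasure P]

lemma abs_integral_sqrt_sub_centralMoment_le {X : Ω → ℝ} (hX : MemLp X 4 P)
    (hnonneg : 0 ≤ᵐ[P] X) (hmean : P[X] = 1) :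
    |∫ ω, √(X ω) ∂P - (1 - Var[X; P] / 8 + centralMoment X 3 P / 16)| ≤
      centralMoment X 4 P := by
  have hcentralMoment (k : ℕ) : ∫ ω, (X ω - 1) ^ k ∂P = centralMoment X k P := by
    simp only [centralMoment, hmean, Pi.pow_apply, Pi.sub_apply]
  have hint_pow {k : ℕ} (hk : k ≤ 4) : Integrable (fun ω ↦ (X ω - 1) ^ k) P :=
    integrable_pow_of_memLp (p := 4) (hX.sub (memLp_const 1)) hk
  have hint : Integrable X P := hX.integrable (by norm_num)
  have hint₁ : Integrable (fun ω ↦ 1 + (X ω - 1) / 2) P := by fun_prop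
  have hint₂ : Integrable (fun ω ↦ 1 + (X ω - 1) / 2 - (X ω - 1) ^ 2 / 8) P :=
    hint₁.sub ((hint_pow (by norm_num)).div_const 8)
  have hint₃ : Integrable
      (fun ω ↦ 1 + (X ω - 1) / 2 - (X ω - 1) ^ 2 / 8 + (X ω - 1) ^ 3 / 16) P :=
    hint₂.add ((hint_pow (by norm_num)).div_const 16)
  have htaylor : ∫ ω, (1 + (X ω - 1) / 2 - (X ω - 1) ^ 2 / 8 + (X ω - 1) ^ 3 / 16) ∂P =
      1 - Var[X; P] / 8 + centralMoment X 3 P / 16 := by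
    rw [integral_add hint₂ ((hint_pow (by norm_num)).div_const 16),
      integral_sub hint₁ ((hint_pow (by norm_num)).div_const 8),
      integral_add (integrable_const 1) (by fun_prop)]
    simp only [integral_div, hcentralMoment]
    rw [centralMoment_two_eq_variance hX.aemeasurable, integral_sub hint (integrable_const 1),
      hmean]
    simp
  rw [← htaylor, ← integral_sub (integrable_sqrt hint) hint₃, ← hcentralMoment 4,
    ← Real.norm_eq_abs]
  refine norm_integral_le_of_norm_le (hint_pow le_rfl) ?_
  filter_upwards [hnonneg] with ω hω using abs_sqrt_sub_taylor_le hω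

open scoped Finset in
theorem abs_integral_sqrt_average_sub_le {Ω' ι : Type*} [MeasurableSpace Ω'] {Q : Measure Ω'}
    {X : ι → Ω → ℝ} {Y : Ω' → ℝ} (hindep : iIndepFun X P)
    (hdist : ∀ i, IdentDistrib (X i) Y P Q) (hY : MemLp Y 4 Q) (hnonneg : 0 ≤ᵐ[Q] Y)
    (hmean : Q[Y] = 1) {s : Finset ι} (hs : s.Nonempty) :
    |∫ ω, √((#s : ℝ)⁻¹ * ∑ i ∈ s, X i ω) ∂P - (1 - Var[Y; Q] / (8 * #s))| ≤
      (|centralMoment Y 3 Q| / 16 + centralMoment Y 4 Q + 3 * Var[Y; Q] ^ 2) / #s ^ 2 := by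
  have : IsProbabilityMeasure Q :=
    ⟨by simpa using ((hdist hs.choose).measure_mem_eq .univ).symm⟩
  set A := (#s : ℝ)⁻¹ • ∑ i ∈ s, X i with hA
  have hA_memLp : MemLp A 4 P :=
    (memLp_finsetSum' s fun i _ ↦ (hdist i).symm.memLp_snd hY).const_smul _
  have hA_mean : P[A] = 1 := (integral_average hdist (hY.integrable (by norm_num)) hs).trans hmean
  have hA_var : Var[A; P] = Var[Y; Q] / #s :=
    variance_average hindep hdist (hY.mono_exponent (by norm_num)) s
  have hA_third : centralMoment A 3 P = centralMoment Y 3 Q / #s ^ 2 :=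
    centralMoment_three_average hindep hdist (hY.mono_exponent (by norm_num)) s
  have hexpansion := (abs_integral_sqrt_sub_centralMoment_le hA_memLp
    (average_nonneg_ae hdist hnonneg s) hA_mean).trans
    (centralMoment_four_average_le hindep hdist hY s)
  have hA_apply (ω : Ω) : A ω = (#s : ℝ)⁻¹ * ∑ i ∈ s, X i ω := by simp [hA]
  simp only [hA_apply, hA_var, hA_third] at hexpansion
  set I := ∫ ω, √((#s : ℝ)⁻¹ * ∑ i ∈ s, X i ω) ∂P
  calc |I - (1 - Var[Y; Q] / (8 * #s))|
      = |I - (1 - Var[Y; Q] / #s / 8 + centralMoment Y 3 Q / #s ^ 2 / 16) +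
          centralMoment Y 3 Q / #s ^ 2 / 16| := by ring_nf
    _ ≤ (centralMoment Y 4 Q + 3 * Var[Y; Q] ^ 2) / #s ^ 2 +
          |centralMoment Y 3 Q / #s ^ 2 / 16| := (abs_add_le _ _).trans (by gcongr)
    _ = (|centralMoment Y 3 Q| / 16 + centralMoment Y 4 Q + 3 * Var[Y; Q] ^ 2) / #s ^ 2 := by
      rw [abs_div, abs_div, abs_of_nonneg (sq_nonneg (#s : ℝ)), Nat.abs_ofNat]
      ring

end Sqrt

section Gaussian

open scoped Nat

lemma integral_pow_two_mul_mul_exp_neg_mul_sq {b : ℝ} (hb : 0 < b) (k : ℕ) :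
    ∫ x : ℝ, x ^ (2 * k) * Real.exp (-b * x ^ 2) =
      (2 * k - 1 : ℕ)‼ / (2 * b) ^ k * √(Real.pi / b) := by
  have habs (x : ℝ) : x ^ (2 * k) * Real.exp (-b * x ^ 2) =
      |x| ^ ((2 * k : ℕ) : ℝ) * Real.exp (-b * |x| ^ (2 : ℝ)) := by
    rw [Real.rpow_natCast, Real.rpow_two, sq_abs, (even_two_mul k).pow_abs]
  have hhalf : (((2 * k : ℕ) : ℝ) + 1) / 2 = k + 1 / 2 := by push_cast; ring
  have hpow : b ^ (-((k : ℝ) + 1 / 2)) = (b ^ k * √b)⁻¹ := by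
    rw [Real.rpow_neg hb.le, Real.rpow_add hb, Real.rpow_natCast, Real.sqrt_eq_rpow]
  simp_rw [habs]
  rw [integral_comp_abs (f := fun x ↦ x ^ ((2 * k : ℕ) : ℝ) * Real.exp (-b * x ^ (2 : ℝ))),
    integral_rpow_mul_exp_neg_mul_rpow two_pos (by linarith [(2 * k).cast_nonneg (α := ℝ)]) hb,
    neg_div, hhalf, hpow, Real.Gamma_nat_add_half, Real.sqrt_div Real.pi_nonneg, mul_pow]
  field_simp

lemma integral_pow_two_mul_gaussianReal_zero (v : ℝ≥0) (k : ℕ) :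
    ∫ x, x ^ (2 * k) ∂gaussianReal 0 v = v ^ k * (2 * k - 1 : ℕ)‼ := by
  rcases eq_or_ne v 0 with rfl | hv
  · cases k <;> simp
  have hv' : (0 : ℝ) < v := by positivity
  have hpdf (x : ℝ) : gaussianPDFReal 0 v x • x ^ (2 * k) =
      (√(2 * Real.pi * v))⁻¹ * (x ^ (2 * k) * Real.exp (-(2 * (v : ℝ))⁻¹ * x ^ 2)) := by
    rw [gaussianPDFReal, smul_eq_mul]
    ring_nf
  rw [integral_gaussianReal_eq_integral_smul hv]
  simp_rw [hpdf]
  rw [integral_const_mul, integral_pow_two_mul_mul_exp_neg_mul_sq (inv_pos.2 (mul_pos two_pos hv')),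
    show Real.pi / (2 * (v : ℝ))⁻¹ = 2 * Real.pi * v by field_simp,
    show 2 * (2 * (v : ℝ))⁻¹ = (v : ℝ)⁻¹ by field_simp, inv_pow]
  field_simp

lemma memLp_sq_gaussianReal (μ : ℝ) (v : ℝ≥0) {p : ℝ≥0∞} (hp : p ≠ ∞) :
    MemLp (fun x ↦ x ^ 2) p (gaussianReal μ v) := by
  have h := (memLp_id_gaussianReal' (μ := μ) (v := v) (p * 2)
    (ENNReal.mul_ne_top hp (by simp))).norm_rpow_div 2
  rw [ENNReal.mul_div_cancel_right (by simp) (by simp)] at h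
  simpa using h

end Gaussian

section ProductLaw

variable {ι α β : Type*} [Fintype ι] [MeasurableSpace α] [MeasurableSpace β]
  (μ : ι → Measure α) (ν : ι → Measure β) [∀ i, IsProbabilityMeasure (μ i)]
  [∀ i, IsProbabilityMeasure (ν i)]

lemma hasLaw_prodMk_eval (i : ι) :
    HasLaw (fun ω : (ι → α) × (ι → β) ↦ (ω.1 i, ω.2 i)) ((μ i).prod (ν i))
      ((Measure.pi μ).prod (Measure.pi ν)) :=
  ((measurePreserving_eval μ i).prod (measurePreserving_eval ν i)).hasLaw

lemma iIndepFun_prodMk_eval :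
    iIndepFun (fun i (ω : (ι → α) × (ι → β)) ↦ (ω.1 i, ω.2 i))
      ((Measure.pi μ).prod (Measure.pi ν)) :=
  (iIndepFun_iff_hasLaw_pi_pi (hasLaw_prodMk_eval μ ν)).2
    (MeasurePreserving.symm _ (measurePreserving_arrowProdEquivProdArrow α β ι μ ν)).hasLaw

end ProductLaw

section Bernoulli

variable {E : Type*} [NormedAddCommGroup E] [NormedSpace ℝ E]

instance instIsProbabilityMeasureBern : IsProbabilityMeasure bern :=
  PMF.toMeasure.isProbabilityMeasure _

lemma bern_real_singleton (b : Bool) : bern.real {b} = 2⁻¹ := by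
  rw [bern, measureReal_def, PMF.toMeasure_apply_singleton _ _ (measurableSet_singleton b)]
  change (cond b ((2⁻¹ : ℝ≥0) : ℝ≥0∞) (1 - (2⁻¹ : ℝ≥0))).toReal = 2⁻¹
  cases b <;> norm_num

lemma integral_bern [CompleteSpace E] (f : Bool → E) :
    ∫ b, f b ∂bern = (2⁻¹ : ℝ) • (f true + f false) := by
  rw [integral_fintype .of_finite]
  simp [bern_real_singleton]

lemma integral_ite_bern_prod {α : Type*} [MeasurableSpace α] (μ : Measure α) [SFinite μ]
    (g : α → E) :
    ∫ p : Bool × α, (if p.1 then g p.2 else 0) ∂bern.prod μ = (2⁻¹ : ℝ) • ∫ x, g x ∂μ := by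
  have hprod := integral_prod_smul (μ := bern) (ν := μ) (fun b ↦ if b then (1 : ℝ) else 0) g
  rw [integral_bern] at hprod
  simpa using hprod

end Bernoulli

section ScaledHalfChiSq

open scoped Nat

/-- The random variable `2 ξ Z²` on the space of pairs `(ξ, Z)`, with `ξ` encoded as a `Bool`.
The factor `2` normalizes its mean to one under `bern.prod (gaussianReal 0 1)`, so that
`(2/n) S_n` is an average of independent copies of it. -/
def scaledHalfChiSq (p : Bool × ℝ) : ℝ := 2 * if p.1 then p.2 ^ 2 else 0

lemma measurable_scaledHalfChiSq : Measurable scaledHalfChiSq :=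
  (Measurable.ite (measurable_fst (measurableSet_singleton true)) (by fun_prop)
    measurable_const).const_mul 2

lemma scaledHalfChiSq_nonneg (p : Bool × ℝ) : 0 ≤ scaledHalfChiSq p := by
  unfold scaledHalfChiSq
  positivity

lemma memLp_scaledHalfChiSq {p : ℝ≥0∞} (hp : p ≠ ∞) :
    MemLp scaledHalfChiSq p (bern.prod (gaussianReal 0 1)) := by
  refine (((memLp_sq_gaussianReal 0 1 hp).comp_snd bern).const_mul 2).of_le
    measurable_scaledHalfChiSq.aestronglyMeasurable (.of_forall fun q ↦ ?_)
  rw [scaledHalfChiSq]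
  split_ifs
  · rfl
  · simpa using sq_nonneg q.2

lemma integral_scaledHalfChiSq_pow {k : ℕ} (hk : k ≠ 0) :
    ∫ p, scaledHalfChiSq p ^ k ∂bern.prod (gaussianReal 0 1) =
      2 ^ (k - 1) * (2 * k - 1 : ℕ)‼ := by
  simp only [scaledHalfChiSq, mul_pow, ite_pow, zero_pow hk, integral_const_mul, ← pow_mul]
  rw [integral_ite_bern_prod (gaussianReal 0 1) (· ^ (2 * k)),
    integral_pow_two_mul_gaussianReal_zero]
  obtain ⟨j, rfl⟩ := Nat.exists_eq_succ_of_ne_zero hk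
  simp [pow_succ, mul_assoc]

lemma integral_scaledHalfChiSq :
    ∫ p, scaledHalfChiSq p ∂bern.prod (gaussianReal 0 1) = 1 := by
  simpa using integral_scaledHalfChiSq_pow one_ne_zero

lemma variance_scaledHalfChiSq : Var[scaledHalfChiSq; bern.prod (gaussianReal 0 1)] = 5 := by
  have hsq : ∫ p, scaledHalfChiSq p ^ 2 ∂bern.prod (gaussianReal 0 1) = 6 := by
    rw [integral_scaledHalfChiSq_pow two_ne_zero]
    norm_num [Nat.doubleFactorial]
  rw [variance_eq_sub (memLp_scaledHalfChiSq (by simp)), integral_scaledHalfChiSq]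
  simp only [Pi.pow_apply, hsq]
  norm_num

end ScaledHalfChiSq

/-- There is a universal constant `C > 0` such that for all `n ≥ 1`, with
`S_n = ∑_{i=1}^{n} ξ_i Z_i²` (for independent `ξ_i ~ Bernoulli(1/2)` and `Z_i` standard
Gaussian), `|𝔼[((2/n) S_n)^{1/2}] − (1 − 5/(8n))| ≤ C/n²`. -/
theorem half_chi_sqrt_mean_expansion : ∃ C : ℝ, 0 < C ∧ ∀ n : ℕ, 1 ≤ n →
    |(∫ ω : (Fin n → Bool) × (Fin n → ℝ),
          Real.sqrt ((2 / (n : ℝ)) * ∑ i, (if ω.1 i then (ω.2 i) ^ 2 else 0))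
        ∂((Measure.pi fun _ : Fin n => bern).prod
            (Measure.pi fun _ : Fin n => gaussianReal 0 1)))
        - (1 - 5 / (8 * (n : ℝ)))| ≤ C / (n : ℝ) ^ 2 := by
  set ν := bern.prod (gaussianReal 0 1)
  refine ⟨|centralMoment scaledHalfChiSq 3 ν| / 16 + centralMoment scaledHalfChiSq 4 ν + 3 * 5 ^ 2,
    ?_, fun n hn ↦ ?_⟩
  · have hfourth_nonneg := centralMoment_nonneg_of_even (n := 4) (by decide) scaledHalfChiSq ν
    positivity
  have hlaw (i : Fin n) := hasLaw_prodMk_eval (fun _ : Fin n ↦ bern) (fun _ ↦ gaussianReal 0 1) i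
  have hindep := (iIndepFun_prodMk_eval (fun _ : Fin n ↦ bern) fun _ ↦ gaussianReal 0 1).comp
    (fun _ ↦ scaledHalfChiSq) fun _ ↦ measurable_scaledHalfChiSq
  have hdist (i : Fin n) := ((hlaw i).identDistrib .id).comp measurable_scaledHalfChiSq
  have hexpansion := abs_integral_sqrt_average_sub_le hindep hdist
    (memLp_scaledHalfChiSq (by simp)) (.of_forall scaledHalfChiSq_nonneg)
    integral_scaledHalfChiSq (Finset.univ_nonempty_iff.2 ⟨⟨0, hn⟩⟩)
  have hsum (ω : (Fin n → Bool) × (Fin n → ℝ)) :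
      (n : ℝ)⁻¹ * ∑ i, scaledHalfChiSq (ω.1 i, ω.2 i) =
        2 / n * ∑ i, if ω.1 i then ω.2 i ^ 2 else 0 := by
    simp only [scaledHalfChiSq, ← Finset.mul_sum]
    ring
  simpa only [Finset.card_univ, Fintype.card_fin, Function.comp_apply, Function.comp_id, hsum,
    variance_scaledHalfChiSq] using hexpansion
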